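/- Let γ ∈ (0,1) and C > 0. Let u : ℝ² → ℝ be a smooth function, 2π-periodic in its first variable x, satisfying the Jacobi equation ∂²u/∂x² + ∂²u/∂s² + 2·sech²(s)·u = 0 at every point (x,s) ∈ ℝ², together with the growth bound |u(x,s)| ≤ C·cosh(s)^{1+γ} for all (x,s). Then there exist real constants c₁,…,c₆ such that u(x,s) = c₁·tanh(s) + c₂·(s·tanh(s) − 1) + c₃·cos(x)·sech(s) + c₄·sin(x)·sech(s) + c₅·cos(x)·(sinh(s) + s·sech(s)) + c₆·sin(x)·(sinh(s) + s·sech(s)). -/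

import Mathlib

/-- `f` solves `f'' = q f` on the real line, with first derivative `f'`. -/
structure IsSchrodingerSolution (q f f' : ℝ → ℝ) : Prop where
  hasDerivAt : ∀ s, HasDerivAt f (f' s) s
  hasDerivAt_deriv : ∀ s, HasDerivAt f' (q s * f s) s

namespace IsSchrodingerSolution

variable {q f f' g g' h h' : ℝ → ℝ}

theorem wronskian_const (hf : IsSchrodingerSolution q f f') (hg : IsSchrodingerSolution q g g')
    (s : ℝ) : f s * g' s - f' s * g s = f 0 * g' 0 - f' 0 * g 0 := by
  have key : ∀ t, HasDerivAt (fun t => f t * g' t - f' t * g t) 0 t := fun t => by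
    convert! ((hf.hasDerivAt t).mul (hg.hasDerivAt_deriv t)).sub
      ((hf.hasDerivAt_deriv t).mul (hg.hasDerivAt t)) using 1
    ring
  exact is_const_of_deriv_eq_zero (fun t => (key t).differentiableAt) (fun t => (key t).deriv) s 0

/-- Two solutions with nonvanishing Wronskian span all solutions. -/
theorem exists_eq_add (hf : IsSchrodingerSolution q f f') (hg : IsSchrodingerSolution q g g')
    (hh : IsSchrodingerSolution q h h') (hW : g 0 * h' 0 - g' 0 * h 0 ≠ 0) :
    ∃ α β : ℝ, ∀ s, f s = α * g s + β * h s := by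
  refine ⟨(f 0 * h' 0 - f' 0 * h 0) / (g 0 * h' 0 - g' 0 * h 0),
    -(f 0 * g' 0 - f' 0 * g 0) / (g 0 * h' 0 - g' 0 * h 0), fun s => ?_⟩
  have hgh := hg.wronskian_const hh s
  have hfh := hf.wronskian_const hh s
  have hfg := hf.wronskian_const hg s
  rw [div_mul_eq_mul_div, div_mul_eq_mul_div, ← add_div, eq_div_iff hW, ← hgh, ← hfh, ← hfg]
  ring

end IsSchrodingerSolution

open Real

theorem hasDerivAt_tanh (s : ℝ) : HasDerivAt tanh (((cosh s)⁻¹) ^ 2) s := by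
  have hc := (cosh_pos s).ne'
  have h := (hasDerivAt_sinh s).div (hasDerivAt_cosh s) hc
  have e : tanh = sinh / cosh := funext fun t => tanh_eq_sinh_div_cosh t
  rw [e]
  convert! h using 1
  field_simp
  linarith [cosh_sq s]

theorem hasDerivAt_sech (s : ℝ) :
    HasDerivAt (fun t => (cosh t)⁻¹) (-(tanh s * (cosh s)⁻¹)) s := by
  have hc := (cosh_pos s).ne'
  convert! (hasDerivAt_cosh s).inv hc using 1
  rw [tanh_eq_sinh_div_cosh]
  field_simp

theorem tanh_sq_eq (s : ℝ) : tanh s ^ 2 = 1 - ((cosh s)⁻¹) ^ 2 := by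
  have hc := (cosh_pos s).ne'
  rw [tanh_eq_sinh_div_cosh]
  field_simp
  linarith [cosh_sq s]

/-- The potential of the ODE solved by the `k`-th Fourier mode of a Jacobi field on the catenoid. -/
noncomputable def modePotential (k s : ℝ) : ℝ := k ^ 2 - 2 * ((cosh s)⁻¹) ^ 2

theorem isSchrodingerSolution_tanh :
    IsSchrodingerSolution (modePotential 0) tanh (fun s => ((cosh s)⁻¹) ^ 2) where
  hasDerivAt := hasDerivAt_tanh
  hasDerivAt_deriv s := by
    convert! (hasDerivAt_sech s).pow 2 using 1
    simp only [modePotential]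
    push_cast
    ring

theorem isSchrodingerSolution_mul_tanh_sub_one :
    IsSchrodingerSolution (modePotential 0) (fun s => s * tanh s - 1)
      (fun s => tanh s + s * ((cosh s)⁻¹) ^ 2) where
  hasDerivAt s := by
    convert! ((hasDerivAt_id s).mul (hasDerivAt_tanh s)).sub_const 1 using 1
    simp
  hasDerivAt_deriv s := by
    convert! (hasDerivAt_tanh s).add ((hasDerivAt_id s).mul ((hasDerivAt_sech s).pow 2)) using 1
    simp only [modePotential, id, Pi.pow_apply]
    push_cast
    ring

theorem isSchrodingerSolution_sech :
    IsSchrodingerSolution (modePotential 1) (fun s => (cosh s)⁻¹)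
      (fun s => -(tanh s * (cosh s)⁻¹)) where
  hasDerivAt := hasDerivAt_sech
  hasDerivAt_deriv s := by
    convert! ((hasDerivAt_tanh s).mul (hasDerivAt_sech s)).neg using 1
    simp only [modePotential]
    linear_combination (-(cosh s)⁻¹) * tanh_sq_eq s

theorem isSchrodingerSolution_sinh_add_mul_sech :
    IsSchrodingerSolution (modePotential 1) (fun s => sinh s + s * (cosh s)⁻¹)
      (fun s => cosh s + ((cosh s)⁻¹ + s * -(tanh s * (cosh s)⁻¹))) where
  hasDerivAt s := by
    convert! (hasDerivAt_sinh s).add ((hasDerivAt_id s).mul (hasDerivAt_sech s)) using 1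
    simp
  hasDerivAt_deriv s := by
    convert! (hasDerivAt_cosh s).add ((hasDerivAt_sech s).add ((hasDerivAt_id s).mul
      ((hasDerivAt_tanh s).mul (hasDerivAt_sech s)).neg)) using 1
    have hc := (cosh_pos s).ne'
    have ht : tanh s * (cosh s)⁻¹ = sinh s * ((cosh s)⁻¹) ^ 2 := by
      rw [tanh_eq_sinh_div_cosh]; field_simp
    simp only [modePotential, id, Pi.neg_apply, Pi.mul_apply]
    linear_combination (-s * (cosh s)⁻¹) * tanh_sq_eq s + 2 * ht

theorem isSchrodingerSolution_exp_mul_sub_tanh (k : ℝ) :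
    IsSchrodingerSolution (modePotential k) (fun s => exp (k * s) * (k - tanh s))
      (fun s => exp (k * s) * (k ^ 2 - k * tanh s - ((cosh s)⁻¹) ^ 2)) where
  hasDerivAt s := by
    convert! ((hasDerivAt_id s).const_mul k).exp.mul ((hasDerivAt_tanh s).const_sub k) using 1
    simp only [id]
    ring
  hasDerivAt_deriv s := by
    convert! ((hasDerivAt_id s).const_mul k).exp.mul
      ((((hasDerivAt_tanh s).const_mul k).const_sub (k ^ 2)).sub ((hasDerivAt_sech s).pow 2)) using 1
    simp only [modePotential, id, Pi.pow_apply, Pi.sub_apply]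
    push_cast
    ring

theorem isSchrodingerSolution_exp_neg_mul_add_tanh (k : ℝ) :
    IsSchrodingerSolution (modePotential k) (fun s => exp (-(k * s)) * (k + tanh s))
      (fun s => -(exp (-(k * s)) * (k ^ 2 + k * tanh s - ((cosh s)⁻¹) ^ 2))) where
  hasDerivAt s := by
    convert! ((hasDerivAt_id s).const_mul k).neg.exp.mul ((hasDerivAt_tanh s).const_add k) using 1
    simp only [id, Pi.neg_apply]
    ring
  hasDerivAt_deriv s := by
    convert! (((hasDerivAt_id s).const_mul k).neg.exp.mul
      ((((hasDerivAt_tanh s).const_mul k).const_add (k ^ 2)).sub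
        ((hasDerivAt_sech s).pow 2))).neg using 1
    simp only [modePotential, id, Pi.pow_apply, Pi.sub_apply, Pi.neg_apply]
    push_cast
    ring

theorem eq_zero_of_abs_exp_combination_le {k p K α β : ℝ} (hk : 1 < k) (hp : 0 ≤ p) (hpk : p < k)
    (hK : 0 ≤ K) (h : ∀ s, 0 ≤ s → |α * (exp (k * s) * (k - tanh s)) +
      β * (exp (-(k * s)) * (k + tanh s))| ≤ K * exp (p * s)) : α = 0 := by
  by_contra hα
  have hα' : 0 < |α| * (k - 1) := mul_pos (abs_pos.2 hα) (by linarith)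
  set M := K + |β| * (k + 1) with hM
  have hM0 : 0 ≤ M := by positivity
  have key : ∀ s, 0 ≤ s → |α| * (k - 1) * exp ((k - p) * s) ≤ M := fun s hs => by
    have ht1 : tanh s < 1 := tanh_lt_one s
    have ht2 : -1 < tanh s := neg_one_lt_tanh s
    have hE := exp_pos (k * s)
    have hG : |α| * (k - 1) * exp (k * s) ≤ |α * (exp (k * s) * (k - tanh s))| := by
      rw [abs_mul, abs_of_nonneg (mul_nonneg hE.le (by linarith)), mul_assoc, mul_comm (k - 1)]
      gcongr
    have hH : |β * (exp (-(k * s)) * (k + tanh s))| ≤ |β| * (k + 1) * exp (p * s) := by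
      rw [abs_mul, abs_of_nonneg (mul_nonneg (exp_pos _).le (by linarith)), mul_assoc,
        mul_comm (exp _)]
      have : exp (-(k * s)) ≤ exp (p * s) := exp_le_exp.2 (by nlinarith [mul_nonneg hp hs])
      gcongr
    have hsum := h s hs
    have htri := abs_sub_abs_le_abs_sub (α * (exp (k * s) * (k - tanh s)))
      (-(β * (exp (-(k * s)) * (k + tanh s))))
    rw [abs_neg, sub_neg_eq_add] at htri
    have hfin : |α| * (k - 1) * exp (k * s) ≤ M * exp (p * s) := by
      rw [hM, add_mul]; linarith
    have hsplit : exp (k * s) = exp ((k - p) * s) * exp (p * s) := by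
      rw [← exp_add]; ring_nf
    rw [hsplit, ← mul_assoc] at hfin
    exact le_of_mul_le_mul_right hfin (exp_pos _)
  have hkp : 0 < k - p := by linarith
  have hs := key (M / (|α| * (k - 1)) / (k - p)) (by positivity)
  rw [mul_div_cancel₀ _ hkp.ne'] at hs
  have h1 := add_one_le_exp (M / (|α| * (k - 1)))
  have h2 := mul_le_mul_of_nonneg_left h1 hα'.le
  rw [mul_add, mul_div_cancel₀ _ hα'.ne'] at h2
  linarith

theorem cosh_le_exp_abs (s : ℝ) : cosh s ≤ exp |s| := by
  rw [← cosh_abs, cosh_eq]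
  have := exp_le_exp.2 (neg_le_self (abs_nonneg s))
  linarith

/-- A Fourier mode of order at least two with subquadratic growth vanishes. -/
theorem IsSchrodingerSolution.eq_zero_of_abs_le_cosh_rpow {k p K : ℝ} {f f' : ℝ → ℝ}
    (hf : IsSchrodingerSolution (modePotential k) f f') (hk : 1 < k) (hp : 0 ≤ p) (hpk : p < k)
    (hbound : ∀ s, |f s| ≤ K * cosh s ^ p) (s : ℝ) : f s = 0 := by
  obtain ⟨α, β, hαβ⟩ := hf.exists_eq_add (isSchrodingerSolution_exp_mul_sub_tanh k)
    (isSchrodingerSolution_exp_neg_mul_add_tanh k) (by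
      simp only [mul_zero, exp_zero, tanh_zero, cosh_zero, neg_zero]
      have : 0 < k * (k ^ 2 - 1) := mul_pos (by linarith) (by nlinarith)
      intro h
      nlinarith)
  have hK : 0 ≤ K := by
    have := (abs_nonneg _).trans (hbound 0)
    simpa using this
  have hexp : ∀ t, |f t| ≤ K * exp (p * |t|) := fun t => by
    refine (hbound t).trans (mul_le_mul_of_nonneg_left ?_ hK)
    rw [mul_comm, exp_mul]
    exact rpow_le_rpow (cosh_pos t).le (cosh_le_exp_abs t) hp
  have hα : α = 0 := eq_zero_of_abs_exp_combination_le hk hp hpk hK (β := β) fun t ht => by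
    have := hexp t
    rwa [hαβ, abs_of_nonneg ht] at this
  have hβ : β = 0 := eq_zero_of_abs_exp_combination_le hk hp hpk hK (β := α) fun t ht => by
    have := hexp (-t)
    rw [hαβ, abs_neg, abs_of_nonneg ht, tanh_neg, mul_neg, neg_neg, sub_neg_eq_add,
      ← sub_eq_add_neg, add_comm] at this
    exact this
  rw [hαβ, hα, hβ]
  ring

theorem hasDerivAt_fst_slice {F : ℝ × ℝ → ℝ} (hF : Differentiable ℝ F) (x s : ℝ) :
    HasDerivAt (fun t => F (t, s)) (fderiv ℝ F (x, s) (1, 0)) x :=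
  (hF (x, s)).hasFDerivAt.comp_hasDerivAt x ((hasDerivAt_id x).prodMk (hasDerivAt_const x s))

theorem hasDerivAt_snd_slice {F : ℝ × ℝ → ℝ} (hF : Differentiable ℝ F) (x s : ℝ) :
    HasDerivAt (fun t => F (x, t)) (fderiv ℝ F (x, s) (0, 1)) s :=
  (hF (x, s)).hasFDerivAt.comp_hasDerivAt s ((hasDerivAt_const s x).prodMk (hasDerivAt_id s))

theorem contDiff_fderiv_apply_const {F : ℝ × ℝ → ℝ} (hF : ContDiff ℝ (⊤ : ℕ∞) F) (v : ℝ × ℝ) :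
    ContDiff ℝ (⊤ : ℕ∞) (fun p => fderiv ℝ F p v) :=
  (hF.fderiv_right (by simp)).clm_apply contDiff_const

theorem hasDerivAt_integral_mul {F : ℝ × ℝ → ℝ} (hF : ContDiff ℝ (⊤ : ℕ∞) F) {w : ℝ → ℝ}
    (hw : Continuous w) (a b s : ℝ) :
    HasDerivAt (fun t => ∫ x in a..b, F (x, t) * w x)
      (∫ x in a..b, fderiv ℝ F (x, s) (0, 1) * w x) s := by
  have hF0 := hF.continuous
  have hF1 : Continuous fun p : ℝ × ℝ => fderiv ℝ F p (0, 1) :=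
    (contDiff_fderiv_apply_const hF _).continuous
  obtain ⟨K, hK⟩ := (isCompact_uIcc.prod (isCompact_closedBall s 1)).exists_bound_of_continuousOn
    (s := Set.uIcc a b ×ˢ Metric.closedBall s 1)
    (f := fun p : ℝ × ℝ => fderiv ℝ F p (0, 1) * w p.1) (by fun_prop)
  refine (intervalIntegral.hasDerivAt_integral_of_dominated_loc_of_deriv_le
    (F := fun t x => F (x, t) * w x) (F' := fun t x => fderiv ℝ F (x, t) (0, 1) * w x)
    (bound := fun _ => K) (Metric.closedBall_mem_nhds s one_pos) ?_ ?_ ?_ ?_ ?_ ?_).2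
  · exact Filter.Eventually.of_forall fun t =>
      Continuous.aestronglyMeasurable (by fun_prop)
  · exact Continuous.intervalIntegrable (by fun_prop) _ _
  · exact Continuous.aestronglyMeasurable
      ((hF1.comp (by fun_prop : Continuous fun x : ℝ => (x, s))).mul hw)
  · exact Filter.Eventually.of_forall fun x hx t ht =>
      hK (x, t) ⟨Set.uIoc_subset_uIcc hx, ht⟩
  · exact intervalIntegrable_const
  · exact Filter.Eventually.of_forall fun x _ t _ =>
      (hasDerivAt_snd_slice (hF.differentiable (by simp)) x t).mul_const (w x)

/-- Integrating a Jacobi field against a periodic eigenfunction `w` of `∂²/∂x²` with eigenvalue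
`-k ^ 2` gives a solution of the `k`-th mode equation. -/
theorem isSchrodingerSolution_integral_mul {u : ℝ → ℝ → ℝ} {w w' : ℝ → ℝ} {k : ℝ}
    (hsmooth : ContDiff ℝ (⊤ : ℕ∞) (fun p : ℝ × ℝ => u p.1 p.2))
    (hper : ∀ x s : ℝ, u (x + 2 * π) s = u x s)
    (heq : ∀ x s : ℝ,
      iteratedDeriv 2 (fun x' => u x' s) x
        + iteratedDeriv 2 (fun s' => u x s') s
        + 2 * ((cosh s)⁻¹) ^ 2 * u x s = 0)
    (hw : ∀ x, HasDerivAt w (w' x) x) (hw' : ∀ x, HasDerivAt w' (-k ^ 2 * w x) x)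
    (hwper : w (2 * π) = w 0) (hwper' : w' (2 * π) = w' 0) :
    ∃ a' : ℝ → ℝ, IsSchrodingerSolution (modePotential k)
      (fun s => ∫ x in (0)..(2 * π), u x s * w x) a' := by
  set U : ℝ × ℝ → ℝ := fun p => u p.1 p.2
  set Us : ℝ × ℝ → ℝ := fun p => fderiv ℝ U p (0, 1)
  set Ux : ℝ × ℝ → ℝ := fun p => fderiv ℝ U p (1, 0)
  have hUs_smooth : ContDiff ℝ (⊤ : ℕ∞) Us := contDiff_fderiv_apply_const hsmooth _
  have hUx_smooth : ContDiff ℝ (⊤ : ℕ∞) Ux := contDiff_fderiv_apply_const hsmooth _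
  have hwc : Continuous w := continuous_iff_continuousAt.2 fun x => (hw x).continuousAt
  have hdx : ∀ x s, HasDerivAt (fun t => u t s) (Ux (x, s)) x :=
    hasDerivAt_fst_slice (hsmooth.differentiable (by simp))
  have hds : ∀ x s, HasDerivAt (fun t => u x t) (Us (x, s)) s :=
    hasDerivAt_snd_slice (hsmooth.differentiable (by simp))
  have hdxx : ∀ x s, HasDerivAt (fun t => Ux (t, s)) (fderiv ℝ Ux (x, s) (1, 0)) x :=
    hasDerivAt_fst_slice (hUx_smooth.differentiable (by simp))
  have hdss : ∀ x s, HasDerivAt (fun t => Us (x, t)) (fderiv ℝ Us (x, s) (0, 1)) s :=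
    hasDerivAt_snd_slice (hUs_smooth.differentiable (by simp))
  have hjacobi : ∀ x s, fderiv ℝ Us (x, s) (0, 1) =
      -fderiv ℝ Ux (x, s) (1, 0) - 2 * ((cosh s)⁻¹) ^ 2 * u x s := fun x s => by
    have h := heq x s
    simp only [iteratedDeriv_succ, iteratedDeriv_zero] at h
    rw [funext fun t => (hdx t s).deriv, funext fun t => (hds x t).deriv,
      (hdxx x s).deriv, (hdss x s).deriv] at h
    linarith
  have hUx_per : ∀ s, Ux (2 * π, s) = Ux (0, s) := fun s => by
    have h := (hdx (0 + 2 * π) s).comp_add_const 0 (2 * π)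
    simp only [hper, zero_add] at h
    exact h.unique (hdx 0 s)
  have hcont : ∀ s, Continuous fun x => u x s * w x := fun s =>
    (hsmooth.continuous.comp (by fun_prop : Continuous fun x : ℝ => (x, s))).mul hwc
  have hcontxx : ∀ s, Continuous fun x => fderiv ℝ Ux (x, s) (1, 0) * w x := fun s =>
    ((contDiff_fderiv_apply_const hUx_smooth (1, 0)).continuous.comp
      (by fun_prop : Continuous fun x : ℝ => (x, s))).mul hwc
  have hparts : ∀ s, ∫ x in (0)..(2 * π), fderiv ℝ Ux (x, s) (1, 0) * w x =
      -k ^ 2 * ∫ x in (0)..(2 * π), u x s * w x := fun s => by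
    have hderiv : ∀ x ∈ Set.uIcc 0 (2 * π),
        HasDerivAt (fun x => Ux (x, s) * w x - u x s * w' x)
          (fderiv ℝ Ux (x, s) (1, 0) * w x - -k ^ 2 * (u x s * w x)) x := fun x _ => by
      convert! ((hdxx x s).mul (hw x)).sub ((hdx x s).mul (hw' x)) using 1
      ring
    have h := intervalIntegral.integral_eq_sub_of_hasDerivAt hderiv
      (((hcontxx s).sub ((hcont s).const_mul _)).intervalIntegrable _ _)
    have hu : u (2 * π) s = u 0 s := by simpa using hper 0 s
    rw [intervalIntegral.integral_sub ((hcontxx s).intervalIntegrable _ _)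
      (((hcont s).const_mul _).intervalIntegrable _ _), intervalIntegral.integral_const_mul,
      hUx_per, hwper, hwper', hu, sub_self] at h
    linarith
  refine ⟨fun s => ∫ x in (0)..(2 * π), Us (x, s) * w x,
    fun s => hasDerivAt_integral_mul hsmooth hwc 0 (2 * π) s, fun s => ?_⟩
  convert! hasDerivAt_integral_mul hUs_smooth hwc 0 (2 * π) s using 1
  have hrw : ∀ x, fderiv ℝ Us (x, s) (0, 1) * w x =
      -(fderiv ℝ Ux (x, s) (1, 0) * w x) - 2 * ((cosh s)⁻¹) ^ 2 * (u x s * w x) := fun x => by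
    rw [hjacobi]; ring
  simp_rw [hrw]
  rw [intervalIntegral.integral_sub ((hcontxx s).fun_neg.intervalIntegrable _ _)
    (((hcont s).const_mul _).intervalIntegrable _ _), intervalIntegral.integral_neg,
    intervalIntegral.integral_const_mul, hparts, modePotential]
  ring

instance fact_two_pi_pos : Fact (0 < 2 * π) := ⟨two_pi_pos⟩

/-- A continuous `2π`-periodic function all of whose Fourier coefficients of order at least two
vanish is a trigonometric polynomial of degree at most one. -/
theorem Function.Periodic.eq_trigonometric_of_integral_eq_zero {f : ℝ → ℝ} (hf : Continuous f)
    (hper : Function.Periodic f (2 * π))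
    (hcos : ∀ n : ℤ, 2 ≤ |n| → ∫ x in (0)..(2 * π), f x * cos (n * x) = 0)
    (hsin : ∀ n : ℤ, 2 ≤ |n| → ∫ x in (0)..(2 * π), f x * sin (n * x) = 0) (x : ℝ) :
    f x = (2 * π)⁻¹ * (∫ x in (0)..(2 * π), f x)
      + π⁻¹ * (∫ x in (0)..(2 * π), f x * cos x) * cos x
      + π⁻¹ * (∫ x in (0)..(2 * π), f x * sin x) * sin x := by
  have hperC : Function.Periodic (fun x => (f x : ℂ)) (2 * π) := fun x => by
    simp only [hper x]
  have hfC : Continuous fun x => (f x : ℂ) := Complex.continuous_ofReal.comp hf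
  let F : C(AddCircle (2 * π), ℂ) := ⟨hperC.lift, continuous_coinduced_dom.2 hfC⟩
  have hF : ∀ y : ℝ, F (y : AddCircle (2 * π)) = f y := fun y => hperC.lift_coe y
  have hfourier : ∀ (n : ℤ) (y : ℝ), (fourier n (y : AddCircle (2 * π)) : ℂ) =
      cos (n * y) + sin (n * y) * Complex.I := fun n y => by
    rw [fourier_coe_apply, Complex.ofReal_cos, Complex.ofReal_sin, ← Complex.exp_mul_I]
    congr 1
    have : (π : ℂ) ≠ 0 := Complex.ofReal_ne_zero.2 pi_ne_zero
    push_cast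
    field_simp
  have hcoeff : ∀ n : ℤ, fourierCoeff F n = ((2 * π)⁻¹ : ℝ) *
      ((∫ x in (0)..(2 * π), f x * cos (n * x) : ℝ) -
        (∫ x in (0)..(2 * π), f x * sin (n * x) : ℝ) * Complex.I) := fun n => by
    rw [fourierCoeff_eq_intervalIntegral F n 0, zero_add, Complex.real_smul, one_div,
      ← intervalIntegral.integral_ofReal, ← intervalIntegral.integral_ofReal,
      ← intervalIntegral.integral_mul_const, ← intervalIntegral.integral_sub
        (Continuous.intervalIntegrable (by fun_prop) _ _)
        (Continuous.intervalIntegrable (by fun_prop) _ _)]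
    congr 1
    refine intervalIntegral.integral_congr fun y _ => ?_
    simp only [hfourier, hF, smul_eq_mul]
    push_cast
    rw [neg_mul, Complex.cos_neg, Complex.sin_neg]
    ring
  have hzero : ∀ n ∉ ({-1, 0, 1} : Finset ℤ), fourierCoeff F n = 0 := fun n hn => by
    have hn2 : 2 ≤ |n| := by
      simp only [Finset.mem_insert, Finset.mem_singleton] at hn
      rw [le_abs]
      lia
    rw [hcoeff, hcos n hn2, hsin n hn2]
    simp
  have hsum := has_pointwise_sum_fourier_series_of_summable
    (hasSum_sum_of_ne_finset_zero hzero).summable (x : AddCircle (2 * π))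
  have hval := hsum.unique (hasSum_sum_of_ne_finset_zero (s := {-1, 0, 1}) fun n hn => by
    rw [hzero n hn, zero_smul])
  rw [hF, Finset.sum_insert (by simp), Finset.sum_insert (by simp), Finset.sum_singleton] at hval
  simp only [hcoeff, hfourier, smul_eq_mul] at hval
  have hre := congrArg Complex.re hval
  simp only [Int.cast_neg, Int.cast_one, Int.cast_zero, neg_mul, one_mul, zero_mul, cos_neg,
    sin_neg, cos_zero, sin_zero, mul_neg, intervalIntegral.integral_neg, mul_one, mul_zero,
    intervalIntegral.integral_zero, Complex.add_re, Complex.mul_re, Complex.sub_re,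
    Complex.ofReal_re, Complex.ofReal_im, Complex.I_re, Complex.I_im, Complex.sub_im,
    Complex.mul_im, Complex.add_im, Complex.ofReal_neg, Complex.neg_re, Complex.neg_im,
    Complex.ofReal_zero, Complex.zero_re, Complex.zero_im] at hre
  rw [hre]
  field_simp
  ring

theorem abs_integral_mul_le {f w : ℝ → ℝ} {K : ℝ} (hf : ∀ x, |f x| ≤ K) (hw : ∀ x, |w x| ≤ 1) :
    |∫ x in (0)..(2 * π), f x * w x| ≤ 2 * π * K := by
  have h := intervalIntegral.norm_integral_le_of_norm_le_const (a := 0) (b := 2 * π)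
    (f := fun x => f x * w x) (C := K) fun x _ => by
      rw [norm_mul, norm_eq_abs, norm_eq_abs]
      exact (mul_le_of_le_one_right (abs_nonneg _) (hw x)).trans (hf x)
  rwa [sub_zero, abs_of_pos two_pi_pos, mul_comm K] at h

/-- Classification of sub-quadratically-growing Jacobi fields on the
cylinder: a smooth `2π`-periodic solution of `∂²u/∂x² + ∂²u/∂s² + 2 sech²(s) u = 0`
with `|u| ≤ C cosh(s)^(1+γ)`, `γ ∈ (0,1)`, is a geometric Jacobi field. -/
theorem jacobi_field_classification
    (γ C : ℝ) (hγ : γ ∈ Set.Ioo (0 : ℝ) 1) (hC : 0 < C)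
    (u : ℝ → ℝ → ℝ)
    (hsmooth : ContDiff ℝ (⊤ : ℕ∞) (fun p : ℝ × ℝ => u p.1 p.2))
    (hper : ∀ x s : ℝ, u (x + 2 * Real.pi) s = u x s)
    (heq : ∀ x s : ℝ,
      iteratedDeriv 2 (fun x' => u x' s) x
        + iteratedDeriv 2 (fun s' => u x s') s
        + 2 * ((Real.cosh s)⁻¹) ^ 2 * u x s = 0)
    (hbound : ∀ x s : ℝ, |u x s| ≤ C * Real.cosh s ^ (1 + γ)) :
    ∃ c₁ c₂ c₃ c₄ c₅ c₆ : ℝ, ∀ x s : ℝ,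
      u x s = c₁ * Real.tanh s + c₂ * (s * Real.tanh s - 1)
        + c₃ * Real.cos x * (Real.cosh s)⁻¹
        + c₄ * Real.sin x * (Real.cosh s)⁻¹
        + c₅ * Real.cos x * (Real.sinh s + s * (Real.cosh s)⁻¹)
        + c₆ * Real.sin x * (Real.sinh s + s * (Real.cosh s)⁻¹) := by
  have hcos_deriv : ∀ k x : ℝ, HasDerivAt (fun t => cos (k * t)) (-(k * sin (k * x))) x :=
    fun k x => by
      convert! ((hasDerivAt_id x).const_mul k).cos using 1
      simp only [id]
      ring
  have hsin_deriv : ∀ k x : ℝ, HasDerivAt (fun t => sin (k * t)) (k * cos (k * x)) x :=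
    fun k x => by
      convert! ((hasDerivAt_id x).const_mul k).sin using 1
      simp only [id]
      ring
  have hcos_per : ∀ n : ℤ, cos (n * (2 * π)) = 1 := cos_int_mul_two_pi
  have hsin_per : ∀ n : ℤ, sin (n * (2 * π)) = 0 := fun n => by
    simpa using sin_add_int_mul_two_pi 0 n
  have hA : ∀ n : ℤ, ∃ a' : ℝ → ℝ, IsSchrodingerSolution (modePotential n)
      (fun s => ∫ x in (0)..(2 * π), u x s * cos (n * x)) a' := fun n =>
    isSchrodingerSolution_integral_mul hsmooth hper heq (hcos_deriv n)
      (fun x => by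
        convert! ((hsin_deriv n x).const_mul (n : ℝ)).neg using 1
        ring)
      (by simp [hcos_per]) (by simp [hsin_per])
  have hB : ∀ n : ℤ, ∃ b' : ℝ → ℝ, IsSchrodingerSolution (modePotential n)
      (fun s => ∫ x in (0)..(2 * π), u x s * sin (n * x)) b' := fun n =>
    isSchrodingerSolution_integral_mul hsmooth hper heq (hsin_deriv n)
      (fun x => by
        convert! (hcos_deriv n x).const_mul (n : ℝ) using 1
        ring)
      (by simp [hsin_per]) (by simp [hcos_per])
  have hvanish : ∀ n : ℤ, 2 ≤ |n| → ∀ (w f' : ℝ → ℝ), (∀ x, |w x| ≤ 1) →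
      IsSchrodingerSolution (modePotential n) (fun s => ∫ x in (0)..(2 * π), u x s * w x) f' →
      ∀ s, ∫ x in (0)..(2 * π), u x s * w x = 0 := fun n hn w f' hw hsol => by
    have hn' : (2 : ℝ) ≤ |(n : ℝ)| := by exact_mod_cast hn
    have hpot : modePotential n = modePotential |(n : ℝ)| := by
      funext s
      simp only [modePotential, sq_abs]
    rw [hpot] at hsol
    refine hsol.eq_zero_of_abs_le_cosh_rpow (p := 1 + γ) (K := 2 * π * C) (by linarith)
      (by linarith [hγ.1]) (by linarith [hγ.2]) fun s => ?_
    rw [mul_assoc]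
    exact abs_integral_mul_le (fun x => hbound x s) hw
  obtain ⟨a', ha⟩ := hA 0
  obtain ⟨b', hb⟩ := hA 1
  obtain ⟨c', hc⟩ := hB 1
  simp only [Int.cast_zero, Int.cast_one, zero_mul, one_mul, cos_zero, mul_one] at ha hb hc
  obtain ⟨α₀, β₀, h₀⟩ := ha.exists_eq_add isSchrodingerSolution_tanh
    isSchrodingerSolution_mul_tanh_sub_one (by simp)
  obtain ⟨α₁, β₁, h₁⟩ := hb.exists_eq_add isSchrodingerSolution_sech
    isSchrodingerSolution_sinh_add_mul_sech (by norm_num)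
  obtain ⟨α₂, β₂, h₂⟩ := hc.exists_eq_add isSchrodingerSolution_sech
    isSchrodingerSolution_sinh_add_mul_sech (by norm_num)
  refine ⟨(2 * π)⁻¹ * α₀, (2 * π)⁻¹ * β₀, π⁻¹ * α₁, π⁻¹ * α₂, π⁻¹ * β₁, π⁻¹ * β₂,
    fun x s => ?_⟩
  have hslice : Continuous fun x => u x s :=
    hsmooth.continuous.comp (by fun_prop : Continuous fun x : ℝ => (x, s))
  have hx := Function.Periodic.eq_trigonometric_of_integral_eq_zero hslice (fun x => hper x s)
    (fun n hn => (hA n).elim fun f' hf =>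
      hvanish n hn _ f' (fun x => abs_cos_le_one _) hf s)
    (fun n hn => (hB n).elim fun f' hf =>
      hvanish n hn _ f' (fun x => abs_sin_le_one _) hf s) x
  rw [h₀, h₁, h₂] at hx
  rw [hx]
  ring
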